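/- Let (G, ξ) be a centered bivariate Gaussian vector with covariance matrix [[a, c], [c, b]], a, b > 0, |c| < √(ab), and M = G + ξ. Then Cov(G, ξ | M > m) → (c² - ab)/(a + b + 2c) as m → ∞; more precisely Cov(G, ξ | M > m) = (c²-ab)/(a+b+2c) + (a+c)(b+c)/m² + o(m⁻²). -/

import Mathlib

open MeasureTheory ProbabilityTheory Filter Asymptotics Real

/-- Expectation of `X` conditioned on an event `s` (i.e. `E[X·1ₛ]/P(s)`). -/
noncomputable def condExpEvent {Ω : Type*} [MeasureSpace Ω] (X : Ω → ℝ) (s : Set Ω) : ℝ :=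
  (∫ ω in s, X ω) / (ℙ s).toReal

/-- Variance of `X` conditioned on an event `s`. -/
noncomputable def condVarEvent {Ω : Type*} [MeasureSpace Ω] (X : Ω → ℝ) (s : Set Ω) : ℝ :=
  condExpEvent (fun ω => X ω ^ 2) s - (condExpEvent X s) ^ 2

/-- Covariance of `X` and `Y` conditioned on an event `s`. -/
noncomputable def condCovEvent {Ω : Type*} [MeasureSpace Ω] (X Y : Ω → ℝ) (s : Set Ω) : ℝ :=
  condExpEvent (fun ω => X ω * Y ω) s - condExpEvent X s * condExpEvent Y s

open scoped NNReal ENNReal Nat Topology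

/-!
Conditioning on `M` belonging to a set does not affect anything independent of `M`. For jointly
Gaussian `X`, `Y`, `M`, the residuals of `X` and `Y` after linear regression on `M` are uncorrelated
with `M`, hence independent of it, so
`Cov(X, Y | M ∈ A) = Cov(X, Y) - Cov(X, M) Cov(Y, M) / Var M
  + Cov(X, M) Cov(Y, M) / (Var M)² * Var(M | M ∈ A)`.
For `M` Gaussian with mean `μ` and variance `v`, the excess of `M` over a high level `m`, rescaled
by `(m - μ) / v`, has density proportional to `exp (-t - ε t²)` with `ε = v / (2 (m - μ)²) → 0`. It
is asymptotically a standard exponential variable, which has variance `1`, so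
`Var(M | M > m) ∼ v² / m²`.
-/

section ConditionalMeasure

variable {Ω E F : Type*} {mΩ : MeasurableSpace Ω} {mE : MeasurableSpace E} {mF : MeasurableSpace F}
  {P : Measure Ω} {M : Ω → E} {W : Ω → F} {A : Set E}

lemma map_cond_preimage (hM : AEMeasurable M P) (hA : MeasurableSet A) :
    (P[|M ⁻¹' A]).map M = (P.map M)[|A] := by
  rw [ProbabilityTheory.cond, ProbabilityTheory.cond, Measure.map_smul,
    ← Measure.restrict_map_of_aemeasurable hM hA, Measure.map_apply_of_aemeasurable hM hA]

lemma prod_cond_left (μ : Measure E) (ν : Measure F) [SFinite μ] [IsProbabilityMeasure ν]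
    (A : Set E) : (μ.prod ν)[|Prod.fst ⁻¹' A] = (μ[|A]).prod ν := by
  rw [← Set.prod_univ, ProbabilityTheory.cond, ProbabilityTheory.cond, Measure.prod_prod,
    ← Measure.prod_restrict, Measure.restrict_univ, measure_univ, mul_one, Measure.prod_smul_left]

lemma map_prodMk_cond_preimage_of_indepFun [IsProbabilityMeasure P] (hM : AEMeasurable M P)
    (hW : AEMeasurable W P) (hMW : M ⟂ᵢ[P] W) (hA : MeasurableSet A) :
    (P[|M ⁻¹' A]).map (fun ω => (M ω, W ω)) = ((P.map M)[|A]).prod (P.map W) := by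
  have := Measure.isProbabilityMeasure_map hW
  have h_pre : M ⁻¹' A = (fun ω => (M ω, W ω)) ⁻¹' (Prod.fst ⁻¹' A) := rfl
  rw [h_pre, map_cond_preimage (hM.prodMk hW) (measurable_fst hA),
    (indepFun_iff_map_prod_eq_prod_map_map hM hW).1 hMW, prod_cond_left]

lemma map_cond_preimage_of_indepFun [IsProbabilityMeasure P] (hM : AEMeasurable M P)
    (hW : AEMeasurable W P) (hMW : M ⟂ᵢ[P] W) (hA : MeasurableSet A) (hPA : P (M ⁻¹' A) ≠ 0) :
    (P[|M ⁻¹' A]).map W = P.map W := by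
  have hMA : P.map M A ≠ 0 := by rwa [Measure.map_apply_of_aemeasurable hM hA]
  have := cond_isProbabilityMeasure hMA
  have hac := cond_absolutelyContinuous (μ := P) (s := M ⁻¹' A)
  rw [← Measure.snd_map_prodMk₀ (hM.mono_ac hac),
    map_prodMk_cond_preimage_of_indepFun hM hW hMW hA, Measure.snd_prod]

lemma indepFun_cond_preimage [IsProbabilityMeasure P] (hM : AEMeasurable M P)
    (hW : AEMeasurable W P) (hMW : M ⟂ᵢ[P] W) (hA : MeasurableSet A) (hPA : P (M ⁻¹' A) ≠ 0) :
    M ⟂ᵢ[P[|M ⁻¹' A]] W := by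
  have hac := cond_absolutelyContinuous (μ := P) (s := M ⁻¹' A)
  rw [indepFun_iff_map_prod_eq_prod_map_map (hM.mono_ac hac) (hW.mono_ac hac),
    map_prodMk_cond_preimage_of_indepFun hM hW hMW hA, map_cond_preimage hM hA,
    map_cond_preimage_of_indepFun hM hW hMW hA hPA]

lemma memLp_cond {V : Type*} [NormedAddCommGroup V] {X : Ω → V} {p : ℝ≥0∞} {s : Set Ω}
    (hX : MemLp X p P) (hs : P s ≠ 0) : MemLp X p P[|s] :=
  hX.restrict s |>.smul_measure (ENNReal.inv_ne_top.2 hs)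

end ConditionalMeasure

section ConditionalCovariance

variable {Ω : Type*} {mΩ : MeasurableSpace Ω} {P : Measure Ω} {M R S : Ω → ℝ} {A : Set ℝ}

lemma covariance_smul_add_smul_add [IsFiniteMeasure P] (hM : MemLp M 2 P)
    (hR : MemLp R 2 P) (hS : MemLp S 2 P) (hMR : cov[M, R; P] = 0) (hMS : cov[M, S; P] = 0)
    (α β : ℝ) :
    cov[α • M + R, β • M + S; P] = α * β * Var[M; P] + cov[R, S; P] := by
  have hαM := hM.const_smul α
  have hβM := hM.const_smul β
  rw [covariance_add_left hαM hR (hβM.add hS), covariance_add_right hαM hβM hS,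
    covariance_add_right hR hβM hS]
  simp only [covariance_smul_left, covariance_smul_right, covariance_comm R M, hMR, hMS,
    covariance_self hM.aemeasurable]
  ring

lemma covariance_cond_preimage_of_indepFun [IsProbabilityMeasure P] (hM : MemLp M 2 P)
    (hR : MemLp R 2 P) (hS : MemLp S 2 P) (hMRS : M ⟂ᵢ[P] (fun ω => (R ω, S ω)))
    (hA : MeasurableSet A) (hPA : P (M ⁻¹' A) ≠ 0) (α β : ℝ) :
    cov[α • M + R, β • M + S; P[|M ⁻¹' A]] =
      α * β * Var[M; P[|M ⁻¹' A]] + cov[R, S; P] := by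
  have := cond_isProbabilityMeasure hPA
  have hRS := hR.aemeasurable.prodMk hS.aemeasurable
  have hac := cond_absolutelyContinuous (μ := P) (s := M ⁻¹' A)
  have hM' := memLp_cond hM hPA
  have hR' := memLp_cond hR hPA
  have hS' := memLp_cond hS hPA
  have h_indep := indepFun_cond_preimage hM.aemeasurable hRS hMRS hA hPA
  have h_law := map_cond_preimage_of_indepFun hM.aemeasurable hRS hMRS hA hPA
  have hMR : cov[M, R; P[|M ⁻¹' A]] = 0 :=
    (h_indep.comp measurable_id measurable_fst).covariance_eq_zero hM' hR'
  have hMS : cov[M, S; P[|M ⁻¹' A]] = 0 :=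
    (h_indep.comp measurable_id measurable_snd).covariance_eq_zero hM' hS'
  have h_cov : cov[R, S; P[|M ⁻¹' A]] = cov[R, S; P] := by
    rw [← covariance_map_fun (Z := fun ω => (R ω, S ω)) (X := Prod.fst) (Y := Prod.snd)
      (by fun_prop) (by fun_prop) (hRS.mono_ac hac), h_law,
      covariance_map_fun (by fun_prop) (by fun_prop) hRS]
  rw [covariance_smul_add_smul_add hM' hR' hS' hMR hMS, h_cov]

end ConditionalCovariance

section Regression

variable {Ω : Type*} {mΩ : MeasurableSpace Ω} {P : Measure Ω} {X Y M : Ω → ℝ} {A : Set ℝ}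

/-- The slope of the least-squares linear regression of `X` on `M`. -/
noncomputable def regressionCoeff (X M : Ω → ℝ) (P : Measure Ω) : ℝ := cov[X, M; P] / Var[M; P]

/-- The part of `X` left unexplained by its linear regression on `M`. There is no intercept, so the
residual need not be centered. -/
noncomputable def regressionResidual (X M : Ω → ℝ) (P : Measure Ω) : Ω → ℝ :=
  X - regressionCoeff X M P • M

lemma smul_add_regressionResidual (X M : Ω → ℝ) (P : Measure Ω) :
    regressionCoeff X M P • M + regressionResidual X M P = X :=
  add_sub_cancel _ _

lemma memLp_regressionResidual (hX : MemLp X 2 P) (hM : MemLp M 2 P) :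
    MemLp (regressionResidual X M P) 2 P :=
  hX.sub (hM.const_smul _)

lemma covariance_regressionResidual_right [IsFiniteMeasure P] (hX : MemLp X 2 P)
    (hM : MemLp M 2 P) (hvar : Var[M; P] ≠ 0) : cov[M, regressionResidual X M P; P] = 0 := by
  rw [regressionResidual, covariance_sub_right hM hX (hM.const_smul _), covariance_smul_right,
    covariance_self hM.aemeasurable, regressionCoeff, div_mul_cancel₀ _ hvar, covariance_comm M X,
    sub_self]

lemma covariance_regressionResidual_regressionResidual [IsFiniteMeasure P] (hX : MemLp X 2 P)
    (hY : MemLp Y 2 P) (hM : MemLp M 2 P) (hvar : Var[M; P] ≠ 0) :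
    cov[regressionResidual X M P, regressionResidual Y M P; P] =
      cov[X, Y; P] - cov[X, M; P] * cov[Y, M; P] / Var[M; P] := by
  conv_lhs => rw [regressionResidual]
  rw [covariance_sub_left hX (hM.const_smul _) (memLp_regressionResidual hY hM),
    covariance_smul_left, covariance_regressionResidual_right hY hM hvar, regressionResidual,
    covariance_sub_right hX hY (hM.const_smul _), covariance_smul_right, regressionCoeff]
  ring

lemma strongDual_real_prod_apply (L : StrongDual ℝ (ℝ × ℝ)) (x y : ℝ) :
    L (x, y) = L (1, 0) * x + L (0, 1) * y := by
  have h_basis : (x, y) = x • ((1, 0) : ℝ × ℝ) + y • (0, 1) := by simp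
  rw [h_basis, map_add, map_smul, map_smul, smul_eq_mul, smul_eq_mul, mul_comm x, mul_comm y]

lemma indepFun_regressionResidual_of_hasGaussianLaw
    (h : HasGaussianLaw (fun ω => (X ω, Y ω, M ω)) P) (hvar : Var[M; P] ≠ 0) :
    M ⟂ᵢ[P] (fun ω => (regressionResidual X M P ω, regressionResidual Y M P ω)) := by
  have := h.isProbabilityMeasure
  have hX := h.fst.memLp_two
  have hY := h.snd.fst.memLp_two
  have hM := h.snd.snd.memLp_two
  have hR := memLp_regressionResidual hX hM
  have hS := memLp_regressionResidual hY hM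
  let x : ℝ × ℝ × ℝ →L[ℝ] ℝ := .fst ℝ ℝ (ℝ × ℝ)
  let y : ℝ × ℝ × ℝ →L[ℝ] ℝ := .fst ℝ ℝ ℝ ∘L .snd ℝ ℝ (ℝ × ℝ)
  let z : ℝ × ℝ × ℝ →L[ℝ] ℝ := .snd ℝ ℝ ℝ ∘L .snd ℝ ℝ (ℝ × ℝ)
  have h_joint : HasGaussianLaw
      (fun ω => (M ω, regressionResidual X M P ω, regressionResidual Y M P ω)) P :=
    h.map (z.prod ((x - regressionCoeff X M P • z).prod (y - regressionCoeff Y M P • z)))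
  refine h_joint.indepFun_of_covariance_strongDual fun L K => ?_
  have hL : L ∘ M = L 1 • M := by
    ext ω
    simpa [mul_comm] using L.map_smul (M ω) 1
  have hK : (K ∘ fun ω => (regressionResidual X M P ω, regressionResidual Y M P ω)) =
      K (1, 0) • regressionResidual X M P + K (0, 1) • regressionResidual Y M P :=
    funext fun ω => strongDual_real_prod_apply K _ _
  rw [hL, hK, covariance_smul_left, covariance_add_right hM (hR.const_smul _) (hS.const_smul _)]
  simp [covariance_smul_right, covariance_regressionResidual_right, hX, hY, hM, hvar]

lemma covariance_cond_preimage_of_hasGaussianLaw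
    (h : HasGaussianLaw (fun ω => (X ω, Y ω, M ω)) P) (hvar : Var[M; P] ≠ 0)
    (hA : MeasurableSet A) (hPA : P (M ⁻¹' A) ≠ 0) :
    cov[X, Y; P[|M ⁻¹' A]] = cov[X, Y; P] - cov[X, M; P] * cov[Y, M; P] / Var[M; P] +
      cov[X, M; P] * cov[Y, M; P] / Var[M; P] ^ 2 * Var[M; P[|M ⁻¹' A]] := by
  have := h.isProbabilityMeasure
  have hX := h.fst.memLp_two
  have hY := h.snd.fst.memLp_two
  have hM := h.snd.snd.memLp_two
  calc cov[X, Y; P[|M ⁻¹' A]]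
    _ = regressionCoeff X M P * regressionCoeff Y M P * Var[M; P[|M ⁻¹' A]] +
          cov[regressionResidual X M P, regressionResidual Y M P; P] := by
      rw [← covariance_cond_preimage_of_indepFun hM (memLp_regressionResidual hX hM)
        (memLp_regressionResidual hY hM) (indepFun_regressionResidual_of_hasGaussianLaw h hvar)
        hA hPA, smul_add_regressionResidual, smul_add_regressionResidual]
    _ = _ := by
      rw [covariance_regressionResidual_regressionResidual hX hY hM hvar, regressionCoeff,
        regressionCoeff]
      ring

end Regression

section GaussianTail

/-- The `k`-th moment of the unnormalised density `exp (-t - ε t²)` on `(0, ∞)`, the shape of a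
rescaled Gaussian tail. -/
noncomputable def expQuadMoment (k : ℕ) (ε : ℝ) : ℝ :=
  ∫ t in Set.Ioi (0 : ℝ), t ^ k * exp (-t - ε * t ^ 2)

/-- The variance of the probability density on `(0, ∞)` proportional to `exp (-t - ε t²)`. -/
noncomputable def expQuadVariance (ε : ℝ) : ℝ :=
  expQuadMoment 2 ε / expQuadMoment 0 ε - (expQuadMoment 1 ε / expQuadMoment 0 ε) ^ 2

lemma integrableOn_pow_mul_exp_neg (k : ℕ) :
    IntegrableOn (fun t : ℝ => t ^ k * exp (-t)) (Set.Ioi 0) := by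
  refine (Real.GammaIntegral_convergent (s := k + 1) (by positivity)).congr_fun (fun t _ => ?_)
    measurableSet_Ioi
  simp [mul_comm]

lemma expQuadMoment_zero_right (k : ℕ) : expQuadMoment k 0 = k ! := by
  rw [← Real.Gamma_nat_eq_factorial, Real.Gamma_eq_integral (by positivity)]
  simp [expQuadMoment, mul_comm]

lemma continuousWithinAt_expQuadMoment (k : ℕ) :
    ContinuousWithinAt (expQuadMoment k) (Set.Ici 0) 0 := by
  refine continuousWithinAt_of_dominated (bound := fun t => t ^ k * exp (-t)) ?_ ?_
    (integrableOn_pow_mul_exp_neg k) ?_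
  · exact Eventually.of_forall fun ε => by fun_prop
  · filter_upwards [self_mem_nhdsWithin] with ε (hε : 0 ≤ ε)
    filter_upwards [ae_restrict_mem measurableSet_Ioi] with t (ht : 0 < t)
    rw [Real.norm_of_nonneg (by positivity)]
    gcongr
    linarith [mul_nonneg hε (sq_nonneg t)]
  · exact Eventually.of_forall fun t => by fun_prop

lemma tendsto_expQuadMoment (k : ℕ) {ι : Type*} {l : Filter ι} {ε : ι → ℝ}
    (hε : Tendsto ε l (𝓝 0)) (hε_nonneg : ∀ᶠ i in l, 0 ≤ ε i) :
    Tendsto (fun i => expQuadMoment k (ε i)) l (𝓝 k !) := by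
  rw [← expQuadMoment_zero_right]
  exact (continuousWithinAt_expQuadMoment k).tendsto.comp
    (tendsto_nhdsWithin_iff.2 ⟨hε, hε_nonneg⟩)

lemma tendsto_expQuadVariance {ι : Type*} {l : Filter ι} {ε : ι → ℝ} (hε : Tendsto ε l (𝓝 0))
    (hε_nonneg : ∀ᶠ i in l, 0 ≤ ε i) : Tendsto (fun i => expQuadVariance (ε i)) l (𝓝 1) := by
  have h_lim k := tendsto_expQuadMoment k hε hε_nonneg
  have h_var : (1 : ℝ) = (2 !) / (0 !) - ((1 !) / (0 !)) ^ 2 := by norm_num [Nat.factorial]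
  rw [h_var]
  exact ((h_lim 2).div (h_lim 0) (by simp)).sub (((h_lim 1).div (h_lim 0) (by simp)).pow 2)

variable {μ m : ℝ} {v : ℝ≥0}

lemma gaussianPDFReal_mul_add (hv : v ≠ 0) (hm : m ≠ μ) (t : ℝ) :
    gaussianPDFReal μ v (v / (m - μ) * t + m) =
      gaussianPDFReal μ v m * exp (-t - v / (2 * (m - μ) ^ 2) * t ^ 2) := by
  have hmμ : m - μ ≠ 0 := sub_ne_zero.2 hm
  have hv' : (v : ℝ) ≠ 0 := NNReal.coe_ne_zero.2 hv
  rw [gaussianPDFReal, gaussianPDFReal, mul_assoc _ (exp _), ← exp_add]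
  congr 2
  field_simp
  ring

lemma setIntegral_gaussianReal (hv : v ≠ 0) {s : Set ℝ} (hs : MeasurableSet s) (f : ℝ → ℝ) :
    ∫ x in s, f x ∂gaussianReal μ v = ∫ x in s, gaussianPDFReal μ v x * f x := by
  rw [gaussianReal_of_var_ne_zero _ hv, setIntegral_withDensity_eq_setIntegral_toReal_smul
    (measurable_gaussianPDF μ v) (ae_of_all _ fun _ => gaussianPDF_lt_top) _ hs]
  simp only [toReal_gaussianPDF, smul_eq_mul]

lemma setIntegral_Ioi_comp_mul_add (f : ℝ → ℝ) (m : ℝ) {δ : ℝ} (hδ : 0 < δ) :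
    ∫ x in Set.Ioi m, f x = δ * ∫ t in Set.Ioi 0, f (δ * t + m) := by
  have h_shift := (measurePreserving_add_right volume m).setIntegral_preimage_emb
    (measurableEmbedding_addRight m) f (Set.Ioi m)
  rw [integral_comp_mul_left_Ioi (fun x => f (x + m)) 0 hδ, smul_eq_mul, mul_zero,
    mul_inv_cancel_left₀ hδ.ne', ← h_shift, Set.preimage_add_const_Ioi, sub_self]

lemma setIntegral_Ioi_sub_pow_gaussianReal (hv : v ≠ 0) (hm : μ < m) (k : ℕ) :
    ∫ x in Set.Ioi m, (x - m) ^ k ∂gaussianReal μ v =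
      gaussianPDFReal μ v m * (v / (m - μ)) ^ (k + 1) *
        expQuadMoment k (v / (2 * (m - μ) ^ 2)) := by
  have hδ : 0 < (v : ℝ) / (m - μ) := div_pos (by positivity) (sub_pos.2 hm)
  rw [setIntegral_gaussianReal hv measurableSet_Ioi, setIntegral_Ioi_comp_mul_add _ m hδ,
    expQuadMoment, ← integral_const_mul, ← integral_const_mul]
  congr 1 with t
  rw [gaussianPDFReal_mul_add hv hm.ne']
  ring

lemma gaussianReal_Ioi_ne_zero (μ : ℝ) (hv : v ≠ 0) (m : ℝ) : gaussianReal μ v (Set.Ioi m) ≠ 0 :=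
  fun h => by simpa using gaussianReal_absolutelyContinuous' μ hv h

lemma measureReal_Ioi_gaussianReal (hv : v ≠ 0) (hm : μ < m) :
    (gaussianReal μ v).real (Set.Ioi m) =
      gaussianPDFReal μ v m * (v / (m - μ)) * expQuadMoment 0 (v / (2 * (m - μ) ^ 2)) := by
  simpa using setIntegral_Ioi_sub_pow_gaussianReal hv hm 0

lemma integral_sub_pow_cond_Ioi_gaussianReal (hv : v ≠ 0) (hm : μ < m) (k : ℕ) :
    ∫ x, (x - m) ^ k ∂(gaussianReal μ v)[|Set.Ioi m] =
      (v / (m - μ)) ^ k * (expQuadMoment k (v / (2 * (m - μ) ^ 2)) /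
        expQuadMoment 0 (v / (2 * (m - μ) ^ 2))) := by
  have hδ : (v : ℝ) / (m - μ) ≠ 0 := (div_pos (by positivity) (sub_pos.2 hm)).ne'
  have hpdf := (gaussianPDFReal_pos μ v m hv).ne'
  rw [ProbabilityTheory.cond, integral_smul_measure, ENNReal.toReal_inv, smul_eq_mul,
    ← measureReal_def, measureReal_Ioi_gaussianReal hv hm,
    setIntegral_Ioi_sub_pow_gaussianReal hv hm, inv_mul_eq_div, pow_succ']
  rw [← mul_assoc, mul_assoc _ (_ ^ k), mul_div_mul_left _ _ (mul_ne_zero hpdf hδ), mul_div_assoc]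

lemma variance_cond_Ioi_gaussianReal (hv : v ≠ 0) (hm : μ < m) :
    Var[id; (gaussianReal μ v)[|Set.Ioi m]] =
      (v / (m - μ)) ^ 2 * expQuadVariance (v / (2 * (m - μ) ^ 2)) := by
  have hIoi := gaussianReal_Ioi_ne_zero μ hv m
  have := cond_isProbabilityMeasure hIoi
  have h_memLp : MemLp (fun x => x - m) 2 (gaussianReal μ v)[|Set.Ioi m] :=
    (memLp_cond (memLp_id_gaussianReal 2) hIoi).sub (memLp_const m)
  have h_mean := integral_sub_pow_cond_Ioi_gaussianReal hv hm 1
  simp only [pow_one] at h_mean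
  rw [← variance_sub_const (by fun_prop) m]
  simp only [id_eq]
  rw [variance_eq_sub h_memLp, expQuadVariance]
  simp only [Pi.pow_apply, integral_sub_pow_cond_Ioi_gaussianReal hv hm 2, h_mean]
  ring

lemma tendsto_sq_mul_variance_cond_Ioi_gaussianReal (μ : ℝ) (hv : v ≠ 0) :
    Tendsto (fun m : ℝ => m ^ 2 * Var[id; (gaussianReal μ v)[|Set.Ioi m]]) atTop
      (𝓝 (v ^ 2)) := by
  have h_sub : Tendsto (fun m : ℝ => m - μ) atTop atTop :=
    tendsto_atTop_add_const_right _ _ tendsto_id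
  have hε : Tendsto (fun m : ℝ => v / (2 * (m - μ) ^ 2)) atTop (𝓝 0) :=
    (((tendsto_pow_atTop two_ne_zero).comp h_sub).const_mul_atTop two_pos).const_div_atTop _
  have h_ratio : Tendsto (fun m : ℝ => m / (m - μ)) atTop (𝓝 1) := by
    have : Tendsto (fun m : ℝ => 1 + μ / (m - μ)) atTop (𝓝 1) := by
      simpa using (h_sub.const_div_atTop μ).const_add 1
    refine this.congr' ?_
    filter_upwards [eventually_gt_atTop μ] with m hm
    field_simp [(sub_pos.2 hm).ne']
    ring
  have h_var := tendsto_expQuadVariance hε (Eventually.of_forall fun m => by positivity)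
  have h_prod := ((h_ratio.pow 2).const_mul ((v : ℝ) ^ 2)).mul h_var
  rw [one_pow, mul_one, mul_one] at h_prod
  refine h_prod.congr' ?_
  filter_upwards [eventually_gt_atTop μ] with m hm
  rw [variance_cond_Ioi_gaussianReal hv hm]
  ring

end GaussianTail

section Asymptotics

variable {f : ℝ → ℝ} {L K : ℝ}

lemma isLittleO_sub_add_div_sq (h : Tendsto (fun m => m ^ 2 * (f m - L)) atTop (𝓝 K)) :
    (fun m => f m - (L + K / m ^ 2)) =o[atTop] (fun m : ℝ => m ^ (-(2 : ℤ))) := by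
  have h_zero : Tendsto (fun m => m ^ 2 * (f m - L) - K) atTop (𝓝 0) := by
    simpa using h.sub_const K
  refine (((isLittleO_one_iff ℝ).2 h_zero).mul_isBigO
    (isBigO_refl (fun m : ℝ => m ^ (-(2 : ℤ))) atTop)).congr' ?_
    (Eventually.of_forall fun m => one_mul _)
  filter_upwards [eventually_ne_atTop 0] with m hm
  rw [zpow_neg, zpow_ofNat]
  field_simp
  ring

lemma tendsto_of_tendsto_sq_mul_sub (h : Tendsto (fun m => m ^ 2 * (f m - L)) atTop (𝓝 K)) :
    Tendsto f atTop (𝓝 L) := by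
  have h_sub : Tendsto (fun m => f m - L) atTop (𝓝 0) := by
    refine (h.div_atTop (tendsto_pow_atTop two_ne_zero)).congr' ?_
    filter_upwards [eventually_ne_atTop 0] with m hm
    exact mul_div_cancel_left₀ _ (pow_ne_zero 2 hm)
  exact tendsto_sub_nhds_zero_iff.1 h_sub

end Asymptotics

section ConditionalEvent

variable {Ω : Type*} [MeasureSpace Ω] {X Y M : Ω → ℝ}

lemma condExpEvent_eq_integral_cond (X : Ω → ℝ) (s : Set Ω) :
    condExpEvent X s = ∫ ω, X ω ∂ℙ[|s] := by
  rw [condExpEvent, ProbabilityTheory.cond, integral_smul_measure, ENNReal.toReal_inv, smul_eq_mul,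
    div_eq_inv_mul]

lemma condCovEvent_eq_covariance_cond [IsFiniteMeasure (ℙ : Measure Ω)] {s : Set Ω}
    (hX : MemLp X 2) (hY : MemLp Y 2) (hs : ℙ s ≠ 0) :
    condCovEvent X Y s = cov[X, Y; ℙ[|s]] := by
  have := cond_isProbabilityMeasure hs
  rw [covariance_eq_sub (memLp_cond hX hs) (memLp_cond hY hs)]
  simp only [condCovEvent, condExpEvent_eq_integral_cond, Pi.mul_apply]

lemma condCovEvent_lt_of_hasGaussianLaw (h : HasGaussianLaw (fun ω => (X ω, Y ω, M ω)) ℙ)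
    (hvar : Var[M; ℙ] ≠ 0) (m : ℝ) :
    condCovEvent X Y {ω | m < M ω} =
      cov[X, Y; ℙ] - cov[X, M; ℙ] * cov[Y, M; ℙ] / Var[M; ℙ] +
        cov[X, M; ℙ] * cov[Y, M; ℙ] / Var[M; ℙ] ^ 2 *
          Var[id; (gaussianReal 𝔼[M] Var[M; ℙ].toNNReal)[|Set.Ioi m]] := by
  have := h.isProbabilityMeasure
  have hM := h.snd.snd.aemeasurable
  have hlaw := h.snd.snd.map_eq_gaussianReal
  have hvar' : Var[M; ℙ].toNNReal ≠ 0 :=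
    (Real.toNNReal_pos.2 ((variance_nonneg M ℙ).lt_of_ne' hvar)).ne'
  have hpos : ℙ (M ⁻¹' Set.Ioi m) ≠ 0 := by
    rw [← Measure.map_apply_of_aemeasurable hM measurableSet_Ioi, hlaw]
    exact gaussianReal_Ioi_ne_zero _ hvar' m
  have h_event : {ω | m < M ω} = M ⁻¹' Set.Ioi m := rfl
  rw [h_event, condCovEvent_eq_covariance_cond h.fst.memLp_two h.snd.fst.memLp_two hpos,
    covariance_cond_preimage_of_hasGaussianLaw h hvar measurableSet_Ioi hpos, ← hlaw,
    ← map_cond_preimage hM measurableSet_Ioi,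
    variance_map aemeasurable_id (hM.mono_ac cond_absolutelyContinuous), Function.id_comp]

lemma tendsto_sq_mul_condCovEvent_sub (h : HasGaussianLaw (fun ω => (X ω, Y ω, M ω)) ℙ)
    (hvar : Var[M; ℙ] ≠ 0) :
    Tendsto (fun m => m ^ 2 * (condCovEvent X Y {ω | m < M ω} -
        (cov[X, Y; ℙ] - cov[X, M; ℙ] * cov[Y, M; ℙ] / Var[M; ℙ]))) atTop
      (𝓝 (cov[X, M; ℙ] * cov[Y, M; ℙ])) := by
  have hvar_pos := (variance_nonneg M ℙ).lt_of_ne' hvar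
  have h_tail := (tendsto_sq_mul_variance_cond_Ioi_gaussianReal 𝔼[M]
    (Real.toNNReal_pos.2 hvar_pos).ne').const_mul
      (cov[X, M; ℙ] * cov[Y, M; ℙ] / Var[M; ℙ] ^ 2)
  rw [Real.coe_toNNReal _ hvar_pos.le, div_mul_cancel₀ _ (pow_ne_zero 2 hvar)] at h_tail
  refine h_tail.congr fun m => ?_
  rw [condCovEvent_lt_of_hasGaussianLaw h hvar, add_sub_cancel_left, mul_left_comm]

theorem gaussian_condCov_goal_discrepancy_general
    (h : HasGaussianLaw (fun ω => (X ω, Y ω, M ω)) ℙ) (hvar : Var[M; ℙ] ≠ 0) :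
    Tendsto (fun m : ℝ => condCovEvent X Y {ω | m < M ω}) atTop
      (𝓝 (cov[X, Y; ℙ] - cov[X, M; ℙ] * cov[Y, M; ℙ] / Var[M; ℙ])) ∧
    (fun m : ℝ => condCovEvent X Y {ω | m < M ω} -
        (cov[X, Y; ℙ] - cov[X, M; ℙ] * cov[Y, M; ℙ] / Var[M; ℙ] +
          cov[X, M; ℙ] * cov[Y, M; ℙ] / m ^ 2))
      =o[atTop] (fun m : ℝ => m ^ (-(2 : ℤ))) :=
  have h_lim := tendsto_sq_mul_condCovEvent_sub h hvar
  ⟨tendsto_of_tendsto_sq_mul_sub h_lim, isLittleO_sub_add_div_sq h_lim⟩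

end ConditionalEvent

section BivariateGaussian

variable {Ω : Type*} {mΩ : MeasurableSpace Ω} {P : Measure Ω} {G ξ : Ω → ℝ}

lemma hasGaussianLaw_prodMk_of_forall
    (h : ∀ u v : ℝ, HasGaussianLaw (fun ω => u * G ω + v * ξ ω) P) :
    HasGaussianLaw (fun ω => (G ω, ξ ω)) P := by
  have hG : AEMeasurable G P := by simpa using (h 1 0).aemeasurable
  have hξ : AEMeasurable ξ P := by simpa using (h 0 1).aemeasurable
  refine ⟨isGaussian_of_isGaussian_map fun L => ?_⟩
  have hL : (L ∘ fun ω => (G ω, ξ ω)) = fun ω => L (1, 0) * G ω + L (0, 1) * ξ ω :=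
    funext fun ω => strongDual_real_prod_apply L _ _
  rw [AEMeasurable.map_map_of_aemeasurable (by fun_prop) (hG.prodMk hξ), hL]
  exact (h _ _).isGaussian_map

lemma hasGaussianLaw_prodMk_prodMk_add (h : HasGaussianLaw (fun ω => (G ω, ξ ω)) P) :
    HasGaussianLaw (fun ω => (G ω, ξ ω, G ω + ξ ω)) P :=
  let x : ℝ × ℝ →L[ℝ] ℝ := .fst ℝ ℝ ℝ
  let y : ℝ × ℝ →L[ℝ] ℝ := .snd ℝ ℝ ℝ
  h.map (x.prod (y.prod (x + y)))

lemma variance_of_map_eq_gaussianReal {X : Ω → ℝ} {μ v : ℝ} (hv : 0 ≤ v)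
    (h : P.map X = gaussianReal μ v.toNNReal) : Var[X; P] = v := by
  have hX : AEMeasurable X P := aemeasurable_of_map_neZero (by rw [h]; infer_instance)
  rw [← Function.id_comp X, ← variance_map aemeasurable_id hX, h, variance_id_gaussianReal,
    Real.coe_toNNReal _ hv]

end BivariateGaussian

lemma add_add_two_mul_pos_of_abs_lt_sqrt_mul {a b c : ℝ} (ha : 0 < a) (hb : 0 < b)
    (hc : |c| < √(a * b)) : 0 < a + b + 2 * c := by
  have h_amgm : 2 * √(a * b) ≤ a + b := by
    rw [Real.sqrt_mul ha.le]
    nlinarith [sq_nonneg (√a - √b), Real.sq_sqrt ha.le, Real.sq_sqrt hb.le]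
  linarith [neg_abs_le c]

/-- Conditional covariance of goal and discrepancy:
`Cov(G, ξ | M > m) → (c² - ab)/(a+b+2c)`, and more precisely
`Cov(G, ξ | M > m) = (c²-ab)/(a+b+2c) + (a+c)(b+c)/m² + o(m⁻²)`. -/
theorem gaussian_condCov_goal_discrepancy {Ω : Type*} [MeasureSpace Ω] [IsProbabilityMeasure (ℙ : Measure Ω)]
    (G ξ : Ω → ℝ) (hG : Measurable G) (hξ : Measurable ξ)
    (a b c : ℝ) (ha : 0 < a) (hb : 0 < b) (hc : |c| < Real.sqrt (a * b))
    (hlaw : ∀ u v : ℝ, Measure.map (fun ω => u * G ω + v * ξ ω) ℙ =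
      gaussianReal 0 (Real.toNNReal (u ^ 2 * a + 2 * u * v * c + v ^ 2 * b))) :
    Tendsto (fun m : ℝ => condCovEvent G ξ {ω | m < G ω + ξ ω}) atTop
      (nhds ((c ^ 2 - a * b) / (a + b + 2 * c))) ∧
    (fun m : ℝ => condCovEvent G ξ {ω | m < G ω + ξ ω} -
        ((c ^ 2 - a * b) / (a + b + 2 * c) + (a + c) * (b + c) / m ^ 2))
      =o[atTop] (fun m : ℝ => m ^ (-(2 : ℤ))) := by
  have hs : 0 < a + b + 2 * c := add_add_two_mul_pos_of_abs_lt_sqrt_mul ha hb hc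
  have hGξ : HasGaussianLaw (fun ω => (G ω, ξ ω)) ℙ :=
    hasGaussianLaw_prodMk_of_forall fun u v => ⟨by rw [hlaw]; infer_instance⟩
  have hG2 := hGξ.fst.memLp_two
  have hξ2 := hGξ.snd.memLp_two
  have hVG : Var[G; ℙ] = a := variance_of_map_eq_gaussianReal ha.le (by simpa using hlaw 1 0)
  have hVξ : Var[ξ; ℙ] = b := variance_of_map_eq_gaussianReal hb.le (by simpa using hlaw 0 1)
  have hVM : Var[G + ξ; ℙ] = a + b + 2 * c :=
    variance_of_map_eq_gaussianReal hs.le (by simpa [Pi.add_def, add_right_comm] using hlaw 1 1)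
  have hcov : cov[G, ξ; ℙ] = c := by linarith [variance_add hG2 hξ2]
  have hGM : cov[G, G + ξ; ℙ] = a + c := by
    rw [covariance_add_right hG2 hG2 hξ2, covariance_self hG2.aemeasurable, hVG, hcov]
  have hξM : cov[ξ, G + ξ; ℙ] = b + c := by
    rw [covariance_add_right hξ2 hG2 hξ2, covariance_self hξ2.aemeasurable, covariance_comm, hVξ,
      hcov, add_comm]
  have h_limit : c - (a + c) * (b + c) / (a + b + 2 * c) = (c ^ 2 - a * b) / (a + b + 2 * c) := by
    rw [eq_div_iff hs.ne', sub_mul, div_mul_cancel₀ _ hs.ne']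
    ring
  have h_main := gaussian_condCov_goal_discrepancy_general
    (M := G + ξ) (hasGaussianLaw_prodMk_prodMk_add hGξ) (hVM ▸ hs.ne')
  rwa [hcov, hGM, hξM, hVM, h_limit] at h_main
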